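/- Lemma 1: There exists a constant C₁ > 0 such that for all sufficiently small γ > 0, (E_g[Z(Y)²] − E_g[T(Y)²]) / E_g[Z(Y)²] ≤ C₁ √(log(1/γ)) √(P₁ − P₂), where P₁ = P_g(exp(Y₁) ≤ γ) = 1/2 and P₂ = P_g(Σᵢ exp(Yᵢ) ≤ γ). -/

import Mathlib

open MeasureTheory Matrix Real Filter

noncomputable def mvnPdf {n : ℕ} (m : Fin n → ℝ) (S : Matrix (Fin n) (Fin n) ℝ)
    (y : Fin n → ℝ) : ℝ :=
  Real.exp (-(1/2) * ((y - m) ⬝ᵥ S⁻¹.mulVec (y - m))) / Real.sqrt ((2 * Real.pi) ^ n * S.det)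

noncomputable def stdNormCDF (x : ℝ) : ℝ :=
  ∫ t in Set.Iic x, Real.exp (-t ^ 2 / 2) / Real.sqrt (2 * Real.pi)

open ProbabilityTheory
open scoped MatrixOrder

/-- The product of `n` standard Gaussian laws has the product density. -/
lemma pi_gaussianReal_eq_withDensity (n : ℕ) :
    Measure.pi (fun _ : Fin n => gaussianReal 0 1) =
      volume.withDensity (fun x => ENNReal.ofReal (∏ i, gaussianPDFReal 0 1 (x i))) := by
  refine Measure.pi_eq fun s hs => ?_
  rw [withDensity_apply _ (MeasurableSet.univ_pi hs), volume_pi, Measure.restrict_pi_pi,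
    ← ofReal_integral_eq_lintegral_ofReal
      (Integrable.fintype_prod fun _ => (integrable_gaussianPDFReal 0 1).restrict)
      (ae_of_all _ fun x => Finset.prod_nonneg fun i _ => gaussianPDFReal_nonneg 0 1 (x i)),
    integral_fintype_prod_eq_prod,
    ENNReal.ofReal_prod_of_nonneg fun i _ => integral_nonneg (gaussianPDFReal_nonneg 0 1)]
  exact Finset.prod_congr rfl fun i _ =>
    (gaussianReal_apply_eq_integral 0 one_ne_zero (s i)).symm

/-- The standard Gaussian density in terms of `mvnPdf` and a symmetric square root `B` of `S`. -/
lemma abs_det_mul_mvnPdf {n : ℕ} (c : Fin n → ℝ) {S B : Matrix (Fin n) (Fin n) ℝ}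
    (hB : B.IsSymm) (hBB : B * B = S) (hdet : B.det ≠ 0) (x : Fin n → ℝ) :
    |B.det| * mvnPdf c S (c + B *ᵥ x) = ∏ i, gaussianPDFReal 0 1 (x i) := by
  have hu : IsUnit B.det := hdet.isUnit
  have hquad : (B *ᵥ x) ⬝ᵥ S⁻¹ *ᵥ (B *ᵥ x) = x ⬝ᵥ x := by
    rw [← hBB, Matrix.mul_inv_rev, mulVec_mulVec, Matrix.mul_assoc, Matrix.nonsing_inv_mul _ hu,
      Matrix.mul_one, dotProduct_mulVec, ← mulVec_transpose, transpose_nonsing_inv, hB.eq,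
      mulVec_mulVec, Matrix.nonsing_inv_mul _ hu, one_mulVec]
  have hsqrt : √((2 * π) ^ n * S.det) = √(2 * π) ^ n * |B.det| := by
    rw [← hBB, det_mul, Real.sqrt_mul (by positivity), Real.sqrt_mul_self_eq_abs]
    congr 1
    rw [Real.sqrt_eq_iff_mul_self_eq (by positivity) (by positivity), ← mul_pow,
      Real.mul_self_sqrt (by positivity)]
  have habs : |B.det| ≠ 0 := abs_ne_zero.mpr hdet
  simp only [mvnPdf, add_sub_cancel_left, hquad, hsqrt, gaussianPDFReal, Finset.prod_mul_distrib,
    ← Real.exp_sum, Finset.prod_const, Finset.card_univ, Fintype.card_fin, NNReal.coe_one, mul_one,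
    sub_zero]
  have : ∑ i, -x i ^ 2 / 2 = -(1 / 2) * (x ⬝ᵥ x) := by
    simp only [dotProduct, Finset.mul_sum]
    exact Finset.sum_congr rfl fun i _ => by ring
  rw [this, inv_pow]
  field_simp

lemma mvnPdf_nonneg {n : ℕ} (c : Fin n → ℝ) (S : Matrix (Fin n) (Fin n) ℝ) (y : Fin n → ℝ) :
    0 ≤ mvnPdf c S y := by
  unfold mvnPdf
  positivity

@[fun_prop]
lemma continuous_mvnPdf {n : ℕ} (c : Fin n → ℝ) (S : Matrix (Fin n) (Fin n) ℝ) :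
    Continuous (mvnPdf c S) := by
  unfold mvnPdf
  fun_prop

/-- The measure with density `mvnPdf` is an affine image of the standard Gaussian law. -/
lemma withDensity_mvnPdf_eq_map {n : ℕ} (c : Fin n → ℝ) {S B : Matrix (Fin n) (Fin n) ℝ}
    (hB : B.IsSymm) (hBB : B * B = S) (hdet : B.det ≠ 0) :
    volume.withDensity (fun y => ENNReal.ofReal (mvnPdf c S y)) =
      (Measure.pi (fun _ : Fin n => gaussianReal 0 1)).map (fun x => c + B *ᵥ x) := by
  have hmeas : Measurable (fun x => c + B *ᵥ x) :=
    (continuous_const.add (continuous_const.matrix_mulVec continuous_id)).measurable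
  have hlin : Measurable (toLin' B) := (LinearMap.continuous_on_pi _).measurable
  have hvol : (volume : Measure (Fin n → ℝ)) =
      ENNReal.ofReal |B.det| • (volume : Measure (Fin n → ℝ)).map (fun x => c + B *ᵥ x) := by
    have h1 : (fun x => c + B *ᵥ x) = (fun x => c + x) ∘ toLin' B := by
      ext x; simp
    rw [h1, ← Measure.map_map (measurable_const_add c) hlin,
      map_matrix_volume_pi_eq_smul_volume_pi hdet, Measure.map_smul, map_add_left_eq_self, smul_smul,
      ← ENNReal.ofReal_mul (abs_nonneg _), ← abs_mul, mul_inv_cancel₀ hdet]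
    simp
  ext s hs
  have hd : Measurable fun y => ENNReal.ofReal (mvnPdf c S y) :=
    (continuous_mvnPdf c S).measurable.ennreal_ofReal
  rw [withDensity_apply _ hs, hvol, Measure.restrict_smul, lintegral_smul_measure, smul_eq_mul,
    setLIntegral_map hs hd hmeas, Measure.map_apply hmeas hs, pi_gaussianReal_eq_withDensity,
    withDensity_apply _ (hmeas hs),
    ← lintegral_const_mul _ (show Measurable fun x => ENNReal.ofReal (mvnPdf c S (c + B *ᵥ x)) from
      hd.comp hmeas)]
  refine lintegral_congr fun x => ?_
  rw [← ENNReal.ofReal_mul (abs_nonneg _), abs_det_mul_mvnPdf c hB hBB hdet]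

lemma withDensity_mvnPdf_eq_multivariateGaussian {n : ℕ} (c : Fin n → ℝ)
    {S : Matrix (Fin n) (Fin n) ℝ} (hS : S.PosDef) :
    volume.withDensity (fun y => ENNReal.ofReal (mvnPdf c S y)) =
      (multivariateGaussian (WithLp.toLp 2 c) S).map WithLp.ofLp := by
  have hBB : CFC.sqrt S * CFC.sqrt S = S := CFC.sqrt_mul_sqrt_self S hS.posSemidef.nonneg
  have hsymm : (CFC.sqrt S).IsSymm := by
    have := (CFC.sqrt_nonneg S).isSelfAdjoint
    rwa [isSelfAdjoint_iff, star_eq_conjTranspose, conjTranspose_eq_transpose_of_trivial] at this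
  have hdet : (CFC.sqrt S).det ≠ 0 := by
    intro h
    have := hS.det_pos
    rw [← hBB, det_mul, h, zero_mul] at this
    exact lt_irrefl _ this
  rw [withDensity_mvnPdf_eq_map c hsymm hBB hdet, multivariateGaussian, ← map_pi_eq_stdGaussian,
    Measure.map_map (by fun_prop) (by fun_prop), Measure.map_map (by fun_prop) (by fun_prop)]
  rfl

lemma map_eval_withDensity_mvnPdf {n : ℕ} (c : Fin n → ℝ)
    {S : Matrix (Fin n) (Fin n) ℝ} (hS : S.PosDef) (i : Fin n) :
    (volume.withDensity (fun y => ENNReal.ofReal (mvnPdf c S y))).map (fun y => y i) =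
      gaussianReal (c i) (S i i).toNNReal := by
  rw [withDensity_mvnPdf_eq_multivariateGaussian c hS,
    Measure.map_map (by fun_prop) (by fun_prop)]
  exact (measurePreserving_eval_multivariateGaussian hS.posSemidef).map_eq

lemma gaussianReal_real_Iic_zero {v : NNReal} (hv : v ≠ 0) :
    (gaussianReal 0 v).real (Set.Iic 0) = 1 / 2 := by
  have := nullSingletonClass_gaussianReal (μ := 0) hv
  have hneg : (gaussianReal 0 v).real (Set.Iic 0) = (gaussianReal 0 v).real (Set.Ici 0) := by
    have h : (gaussianReal 0 v).map (fun x => -x) = gaussianReal 0 v := by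
      simpa using gaussianReal_map_neg (μ := 0) (v := v)
    conv_lhs => rw [← h]
    rw [map_measureReal_apply measurable_neg measurableSet_Iic]
    simp
  have hcompl := measureReal_compl (μ := gaussianReal 0 v) (measurableSet_Iic (a := (0 : ℝ)))
  rw [Set.compl_Iic, probReal_univ] at hcompl
  have : (gaussianReal 0 v).real (Set.Ici 0) = (gaussianReal 0 v).real (Set.Ioi 0) :=
    measureReal_congr Ioi_ae_eq_Ici.symm
  linarith

lemma setIntegral_gaussianReal (v : NNReal) (hv : v ≠ 0) {s : Set ℝ} (hs : MeasurableSet s)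
    (f : ℝ → ℝ) :
    ∫ u in s, f u ∂(gaussianReal 0 v) = ∫ u in s, gaussianPDFReal 0 v u * f u := by
  rw [gaussianReal_of_var_ne_zero _ hv, setIntegral_withDensity_eq_setIntegral_toReal_smul
    (measurable_gaussianPDF 0 v) (ae_of_all _ fun _ => gaussianPDF_lt_top) _ hs]
  simp [toReal_gaussianPDF]

lemma gaussianPDFReal_zero_le (v : NNReal) (u : ℝ) :
    gaussianPDFReal 0 v u ≤ (√(2 * π * v))⁻¹ := by
  unfold gaussianPDFReal
  refine mul_le_of_le_one_right (by positivity) (Real.exp_le_one_iff.mpr ?_)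
  rw [neg_div]
  exact neg_nonpos.mpr (by positivity)

lemma setIntegral_exp_gaussianReal_le {v : NNReal} (hv : v ≠ 0) {b : ℝ} (hb : 0 < b) :
    ∫ u in Set.Iic 0, Real.exp (b * u) ∂(gaussianReal 0 v) ≤ (√(2 * π * v))⁻¹ / b := by
  rw [setIntegral_gaussianReal v hv measurableSet_Iic]
  have hint : IntegrableOn (fun u : ℝ => Real.exp (b * u)) (Set.Iic 0) :=
    integrableOn_exp_mul_Iic hb 0
  calc _ ≤ ∫ u in Set.Iic (0 : ℝ), (√(2 * π * v))⁻¹ * Real.exp (b * u) := by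
        refine integral_mono_of_nonneg (ae_of_all _ fun u => ?_) (hint.const_mul _)
          (ae_of_all _ fun u => ?_)
        · exact mul_nonneg (gaussianPDFReal_nonneg _ _ _) (Real.exp_pos _).le
        · exact mul_le_mul_of_nonneg_right (gaussianPDFReal_zero_le v u) (Real.exp_pos _).le
    _ = _ := by
        rw [integral_const_mul, integral_exp_mul_Iic hb]
        simp [div_eq_mul_inv]

lemma integrableOn_exp_gaussianReal (v : NNReal) {b : ℝ} (hb : 0 ≤ b) :
    IntegrableOn (fun u => Real.exp (b * u)) (Set.Iic 0) (gaussianReal 0 v) := by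
  refine Measure.integrableOn_of_bounded (M := 1) (measure_ne_top _ _) (by fun_prop) ?_
  filter_upwards [ae_restrict_mem measurableSet_Iic] with u hu
  rw [Real.norm_eq_abs, abs_of_pos (Real.exp_pos _), Real.exp_le_one_iff]
  exact mul_nonpos_of_nonneg_of_nonpos hb hu

lemma le_setIntegral_exp_gaussianReal {v : NNReal} (hv : v ≠ 0) {a : ℝ} (ha : 1 ≤ a) :
    gaussianPDFReal 0 v 1 * Real.exp (-2) / a ≤
      ∫ u in Set.Iic 0, Real.exp (2 * a * u) ∂(gaussianReal 0 v) := by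
  have ha0 : 0 < a := by linarith
  have hsub : Set.Icc (-(1 / a)) 0 ⊆ Set.Iic (0 : ℝ) := fun u hu => hu.2
  refine le_trans ?_ (setIntegral_mono_set (integrableOn_exp_gaussianReal v (by positivity))
    (ae_of_all _ fun u => (Real.exp_pos _).le) hsub.eventuallyLE)
  rw [setIntegral_gaussianReal v hv measurableSet_Icc]
  have hcont : Continuous fun u => gaussianPDFReal 0 v u * Real.exp (2 * a * u) := by
    unfold gaussianPDFReal
    fun_prop
  calc _ = ∫ u in Set.Icc (-(1 / a)) 0, gaussianPDFReal 0 v 1 * Real.exp (-2) := by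
        have : (0 : ℝ) ≤ 1 / a := by positivity
        simp [Real.volume_real_Icc, ha0.le]
        ring
    _ ≤ _ := by
        refine setIntegral_mono_on (integrableOn_const (by simp)) (hcont.integrableOn_Icc)
          measurableSet_Icc fun u hu => ?_
        have h1 : 1 / a ≤ 1 := by rw [div_le_one ha0]; exact ha
        have h2 : u ^ 2 ≤ 1 := by nlinarith [hu.1, hu.2]
        refine mul_le_mul ?_ ?_ (Real.exp_pos _).le (gaussianPDFReal_nonneg _ _ _)
        · unfold gaussianPDFReal
          refine mul_le_mul_of_nonneg_left (Real.exp_le_exp.mpr ?_) (by positivity)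
          refine div_le_div_of_nonneg_right ?_ (by positivity)
          linarith
        · refine Real.exp_le_exp.mpr ?_
          have : -1 ≤ a * u := by
            have := mul_le_mul_of_nonneg_left hu.1 ha0.le
            rwa [mul_neg, mul_one_div_cancel ha0.ne'] at this
          linarith

/-- The Cauchy–Schwarz estimate: the exponential moment of a Gaussian `U` lost when `{U ≤ 0}`
shrinks to a subset `T` is controlled by the square root of the lost probability. -/
lemma exists_exp_moment_diff_le {v : NNReal} (hv : v ≠ 0) :
    ∃ K : ℝ, 0 < K ∧ ∀ {Ω : Type} [MeasurableSpace Ω] (ν : Measure Ω) [IsProbabilityMeasure ν]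
      (U : Ω → ℝ) (_ : Measurable U) (_ : ν.map U = gaussianReal 0 v) (T : Set Ω)
      (_ : MeasurableSet T) (_ : T ⊆ {ω | U ω ≤ 0}) (a : ℝ) (_ : 1 ≤ a),
      0 < ∫ ω in {ω | U ω ≤ 0}, Real.exp (2 * a * U ω) ∂ν ∧
      ((∫ ω in {ω | U ω ≤ 0}, Real.exp (2 * a * U ω) ∂ν) - ∫ ω in T, Real.exp (2 * a * U ω) ∂ν) /
        (∫ ω in {ω | U ω ≤ 0}, Real.exp (2 * a * U ω) ∂ν) ≤
        K * √a * √(ν.real {ω | U ω ≤ 0} - ν.real T) := by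
  set p := gaussianPDFReal 0 v 1 * Real.exp (-2) with hp
  have hp0 : 0 < p := mul_pos (gaussianPDFReal_pos _ _ _ hv) (Real.exp_pos _)
  set q := (√(2 * π * v))⁻¹ / 4 with hq
  have hv0 : (0 : ℝ) < v := by exact_mod_cast pos_iff_ne_zero.mpr hv
  have hq0 : 0 < q := by positivity
  refine ⟨√q / p, by positivity, ?_⟩
  intro Ω _ ν _ U hU hlaw T hT hTs a ha
  have ha0 : 0 < a := by linarith
  have hs : MeasurableSet {ω | U ω ≤ 0} := measurableSet_le hU measurable_const
  have htrans (b : ℝ) : ∫ ω in {ω | U ω ≤ 0}, Real.exp (b * U ω) ∂ν =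
      ∫ u in Set.Iic 0, Real.exp (b * u) ∂(gaussianReal 0 v) := by
    rw [← hlaw, setIntegral_map measurableSet_Iic (by fun_prop) hU.aemeasurable]
    rfl
  have hlow : p / a ≤ ∫ ω in {ω | U ω ≤ 0}, Real.exp (2 * a * U ω) ∂ν := by
    rw [htrans]
    exact le_setIntegral_exp_gaussianReal hv ha
  have hpos := lt_of_lt_of_le (div_pos hp0 ha0) hlow
  have hbdd : ∀ᵐ ω ∂ν.restrict {ω | U ω ≤ 0}, ‖Real.exp (2 * a * U ω)‖ ≤ 1 := by
    filter_upwards [ae_restrict_mem hs] with ω hω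
    rw [Real.norm_eq_abs, abs_of_pos (Real.exp_pos _), Real.exp_le_one_iff]
    exact mul_nonpos_of_nonneg_of_nonpos (by positivity) hω
  have hmeas : Measurable fun ω => Real.exp (2 * a * U ω) := by fun_prop
  have hint : IntegrableOn (fun ω => Real.exp (2 * a * U ω)) {ω | U ω ≤ 0} ν :=
    Measure.integrableOn_of_bounded (M := 1) (measure_ne_top _ _) hmeas.aestronglyMeasurable hbdd
  refine ⟨hpos, ?_⟩
  rw [← setIntegral_sdiff hT hint hTs, ← measureReal_sdiff hTs hT]
  set D := {ω | U ω ≤ 0} \ T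
  have hD : MeasurableSet D := hs.diff hT
  have hCS := integral_mul_le_Lp_mul_Lq_of_nonneg (μ := ν.restrict {ω | U ω ≤ 0})
    (p := 2) (q := 2) Real.HolderConjugate.two_two
    (f := fun ω => Real.exp (2 * a * U ω)) (g := D.indicator 1)
    (ae_of_all _ fun _ => (Real.exp_pos _).le)
    (ae_of_all _ fun _ => Set.indicator_nonneg (fun _ _ => zero_le_one) _)
    (MemLp.of_bound hmeas.aestronglyMeasurable 1 hbdd)
    ((memLp_const (1 : ℝ)).indicator hD)
  have hDs : D ∩ {ω | U ω ≤ 0} = D := Set.inter_eq_left.mpr Set.sdiff_subset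
  have hL : ∫ ω in {ω | U ω ≤ 0}, Real.exp (2 * a * U ω) * D.indicator 1 ω ∂ν =
      ∫ ω in D, Real.exp (2 * a * U ω) ∂ν := by
    have : (fun ω => Real.exp (2 * a * U ω) * D.indicator (1 : Ω → ℝ) ω) =
        D.indicator fun ω => Real.exp (2 * a * U ω) := by
      ext ω; by_cases h : ω ∈ D <;> simp [h]
    rw [this, integral_indicator hD, Measure.restrict_restrict hD, hDs]
  have hR1 : ∫ ω in {ω | U ω ≤ 0}, Real.exp (2 * a * U ω) ^ (2 : ℝ) ∂ν ≤ q / a := by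
    have : ∀ ω, Real.exp (2 * a * U ω) ^ (2 : ℝ) = Real.exp (4 * a * U ω) := fun ω => by
      rw [← Real.exp_mul]; ring_nf
    simp_rw [this]
    rw [htrans]
    refine (setIntegral_exp_gaussianReal_le hv (by positivity)).trans_eq ?_
    rw [hq, div_div]
  have hR2 : ∫ ω in {ω | U ω ≤ 0}, (D.indicator (1 : Ω → ℝ) ω) ^ (2 : ℝ) ∂ν = ν.real D := by
    have : (fun ω => (D.indicator (1 : Ω → ℝ) ω) ^ (2 : ℝ)) = D.indicator 1 := by
      ext ω; by_cases h : ω ∈ D <;> simp [h]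
    rw [this, integral_indicator_one hD, measureReal_restrict_apply hD, hDs]
  rw [hL, hR2, ← Real.sqrt_eq_rpow, ← Real.sqrt_eq_rpow] at hCS
  have hnum : ∫ ω in D, Real.exp (2 * a * U ω) ∂ν ≤ √(q / a) * √(ν.real D) :=
    hCS.trans (by gcongr)
  calc _ ≤ √(q / a) * √(ν.real D) / (p / a) := by gcongr
    _ = √q / p * √a * √(ν.real D) := by
        rw [Real.sqrt_div' _ ha0.le]
        have hsa : √a ≠ 0 := by positivity
        have : a = √a * √a := (Real.mul_self_sqrt ha0.le).symm
        field_simp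
        rw [pow_two, ← this, mul_comm]

/-- Shifting the mean of a Gaussian density along the first column of the covariance matrix tilts
it by an exponential in the first coordinate. -/
lemma mvnPdf_eq_exp_mul_mvnPdf {n : ℕ} (m : Fin n → ℝ) {S : Matrix (Fin n) (Fin n) ℝ}
    (hS : S.PosDef) (i : Fin n) (t : ℝ) (y : Fin n → ℝ) :
    mvnPdf m S y =
      Real.exp (-(t * (y i - m i)) + t ^ 2 * S i i / 2) *
        mvnPdf (m + t • S *ᵥ Pi.single i 1) S y := by
  have hu : IsUnit S.det := hS.det_pos.ne'.isUnit
  set w := y - m with hw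
  have hsymm : (S⁻¹)ᵀ = S⁻¹ := by
    have := hS.isHermitian
    rw [IsHermitian, conjTranspose_eq_transpose_of_trivial] at this
    rw [transpose_nonsing_inv, this]
  have h1 : y - (m + t • S *ᵥ Pi.single i 1) = w - t • S *ᵥ Pi.single i 1 := by
    rw [hw, sub_sub]
  have hinv : S⁻¹ *ᵥ (S *ᵥ Pi.single i 1) = Pi.single i (1 : ℝ) := by
    rw [mulVec_mulVec, Matrix.nonsing_inv_mul _ hu, one_mulVec]
  have hcross : (S *ᵥ Pi.single i 1) ⬝ᵥ S⁻¹ *ᵥ w = w i := by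
    rw [dotProduct_mulVec, ← mulVec_transpose, hsymm, hinv, single_one_dotProduct]
  unfold mvnPdf
  rw [h1, ← hw, ← mul_div_assoc, ← Real.exp_add]
  congr 2
  simp only [mulVec_sub, mulVec_smul, hinv, sub_dotProduct, dotProduct_sub, smul_dotProduct,
    dotProduct_smul, hcross, dotProduct_single_one, smul_eq_mul]
  have hwi : (w - t • S *ᵥ Pi.single i 1) i = w i - t * S i i := by simp
  rw [hwi, hw, Pi.sub_apply]
  ring

theorem stmt10 {n : ℕ} (m : Fin (n + 1) → ℝ) (S : Matrix (Fin (n + 1)) (Fin (n + 1)) ℝ)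
    (hS : S.PosDef)
    (hA : ∀ j : Fin (n + 1), j ≠ 0 →
      Real.sqrt (S 0 0) < S 0 j / Real.sqrt (S 0 0 * S j j) * Real.sqrt (S j j)) :
    let Λ : ℝ → Fin (n + 1) → ℝ := fun γ k =>
      if k = 0 then Real.log γ - m 0 else S k 0 / S 0 0 * (Real.log γ - m 0)
    let g : ℝ → (Fin (n + 1) → ℝ) → ℝ := fun γ y => mvnPdf (m + Λ γ) S y
    let L : ℝ → (Fin (n + 1) → ℝ) → ℝ := fun γ y => mvnPdf m S y / g γ y
    let EZ2 : ℝ → ℝ := fun γ => ∫ y : Fin (n + 1) → ℝ,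
      Set.indicator {y : Fin (n + 1) → ℝ | Real.exp (y 0) ≤ γ} (fun _ => (1 : ℝ)) y *
        (L γ y) ^ 2 * g γ y
    let ET2 : ℝ → ℝ := fun γ => ∫ y : Fin (n + 1) → ℝ,
      Set.indicator {y : Fin (n + 1) → ℝ | ∑ i, Real.exp (y i) ≤ γ} (fun _ => (1 : ℝ)) y *
        (L γ y) ^ 2 * g γ y
    let P1 : ℝ → ℝ := fun γ => ∫ y in {y : Fin (n + 1) → ℝ | Real.exp (y 0) ≤ γ}, g γ y
    let P2 : ℝ → ℝ := fun γ =>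
      ∫ y in {y : Fin (n + 1) → ℝ | ∑ i, Real.exp (y i) ≤ γ}, g γ y
    (∀ γ : ℝ, 0 < γ → P1 γ = 1 / 2) ∧
    ∃ C₁ : ℝ, 0 < C₁ ∧ ∀ᶠ γ in nhdsWithin (0 : ℝ) (Set.Ioi 0),
      (EZ2 γ - ET2 γ) / EZ2 γ ≤
        C₁ * Real.sqrt (Real.log (1 / γ)) * Real.sqrt (P1 γ - P2 γ) := by
  intro Λ g L EZ2 ET2 P1 P2
  have hv : 0 < S 0 0 := hS.diag_pos
  set v := (S 0 0).toNNReal with hvdef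
  have hv0 : v ≠ 0 := by simpa [hvdef] using hv
  set ν : ℝ → Measure (Fin (n + 1) → ℝ) :=
    fun γ => volume.withDensity (fun y => ENNReal.ofReal (g γ y)) with hν
  have hΛ (γ : ℝ) : Λ γ = ((Real.log γ - m 0) / S 0 0) • S *ᵥ Pi.single 0 1 := by
    ext k
    by_cases hk : k = 0
    · subst hk; simp [Λ, hv.ne']
    · simp [Λ, hk]; ring
  have hgcont (γ : ℝ) : Measurable fun y => ENNReal.ofReal (g γ y) :=
    (continuous_mvnPdf _ S).measurable.ennreal_ofReal
  have hprob (γ : ℝ) : IsProbabilityMeasure (ν γ) := by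
    simp only [hν, g, withDensity_mvnPdf_eq_multivariateGaussian _ hS]
    exact Measure.isProbabilityMeasure_map (by fun_prop)
  have hU (γ : ℝ) : Measurable fun y : Fin (n + 1) → ℝ => y 0 - Real.log γ := by fun_prop
  have hlaw (γ : ℝ) : (ν γ).map (fun y => y 0 - Real.log γ) = gaussianReal 0 v := by
    have := map_eval_withDensity_mvnPdf (m + Λ γ) hS 0
    have hc : (m + Λ γ) 0 = Real.log γ := by simp [Λ]
    rw [hc] at this
    have h2 := gaussianReal_map_sub_const (μ := Real.log γ) (v := v) (Real.log γ)
    rw [← this, Measure.map_map (by fun_prop) (by fun_prop), sub_self] at h2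
    exact h2
  have hset (γ : ℝ) (hγ : 0 < γ) : {y : Fin (n + 1) → ℝ | Real.exp (y 0) ≤ γ} =
      {y | y 0 - Real.log γ ≤ 0} := by
    ext y
    simp [Real.le_log_iff_exp_le hγ]
  have hT (γ : ℝ) : MeasurableSet {y : Fin (n + 1) → ℝ | ∑ i, Real.exp (y i) ≤ γ} :=
    measurableSet_le (by fun_prop) measurable_const
  have hsub (γ : ℝ) : {y : Fin (n + 1) → ℝ | ∑ i, Real.exp (y i) ≤ γ} ⊆
      {y | Real.exp (y 0) ≤ γ} := fun y hy =>
    (Finset.single_le_sum (f := fun i => Real.exp (y i)) (fun i _ => (Real.exp_pos _).le)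
      (Finset.mem_univ 0)).trans hy
  have hI (γ : ℝ) {s : Set (Fin (n + 1) → ℝ)} (hs : MeasurableSet s) (h : (Fin (n + 1) → ℝ) → ℝ) :
      ∫ y in s, h y ∂(ν γ) = ∫ y in s, g γ y * h y := by
    rw [hν]
    simp only []
    rw [setIntegral_withDensity_eq_setIntegral_toReal_smul (hgcont γ)
      (ae_of_all _ fun _ => ENNReal.ofReal_lt_top) _ hs]
    simp [g, ENNReal.toReal_ofReal (mvnPdf_nonneg _ S _)]
  have hP (γ : ℝ) {s : Set (Fin (n + 1) → ℝ)} (hs : MeasurableSet s) :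
      ∫ y in s, g γ y = (ν γ).real s := by
    have := hI γ hs fun _ => 1
    simpa using this.symm
  have hM (γ : ℝ) (hγ : 0 < γ) : MeasurableSet {y : Fin (n + 1) → ℝ | Real.exp (y 0) ≤ γ} :=
    measurableSet_le (by fun_prop) measurable_const
  refine ⟨fun γ hγ => ?_, ?_⟩
  · simp only [P1]
    rw [hP γ (hM γ hγ), hset γ hγ, ← gaussianReal_real_Iic_zero hv0, ← hlaw γ,
      map_measureReal_apply (hU γ) measurableSet_Iic]
    rfl
  obtain ⟨K, hK, hmain⟩ := exists_exp_moment_diff_le hv0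
  refine ⟨K * √(2 / S 0 0), by positivity, ?_⟩
  have hlog : Tendsto (fun γ : ℝ => Real.log (1 / γ)) (nhdsWithin 0 (Set.Ioi 0)) atTop := by
    simp only [one_div, Real.log_inv]
    exact tendsto_neg_atBot_atTop.comp Real.tendsto_log_nhdsGT_zero
  filter_upwards [self_mem_nhdsWithin, hlog.eventually_ge_atTop (S 0 0 - m 0),
    hlog.eventually_ge_atTop (m 0)] with γ hγ hγ1 hγ2
  have hγ : 0 < γ := hγ
  have hlogγ : Real.log (1 / γ) = -Real.log γ := by simp
  set a := (Real.log (1 / γ) + m 0) / S 0 0 with ha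
  have ha1 : 1 ≤ a := by
    rw [ha, le_div_iff₀ hv]; linarith
  have ha2 : a ≤ 2 / S 0 0 * Real.log (1 / γ) := by
    rw [ha, div_mul_eq_mul_div]
    gcongr
    linarith
  set κ := Real.exp (a ^ 2 * S 0 0 + 2 * a * (Real.log γ - m 0)) with hκ
  have hκ0 : 0 < κ := Real.exp_pos _
  have hL (y : Fin (n + 1) → ℝ) : L γ y ^ 2 = κ * Real.exp (2 * a * (y 0 - Real.log γ)) := by
    have hg0 : g γ y ≠ 0 := by
      have := hS.det_pos
      simp only [g, mvnPdf]
      positivity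
    have hat : (Real.log γ - m 0) / S 0 0 = -a := by
      rw [ha, hlogγ]; ring
    have : L γ y = Real.exp (a * (y 0 - m 0) + a ^ 2 * S 0 0 / 2) := by
      simp only [L]
      rw [div_eq_iff hg0, mvnPdf_eq_exp_mul_mvnPdf m hS 0 (-a) y, ← hat, ← hΛ, hat]
      congr 2
      ring
    rw [this, hκ, ← Real.exp_add, ← Real.exp_nat_mul]
    congr 1
    push_cast
    ring
  have hE {s : Set (Fin (n + 1) → ℝ)} (hs : MeasurableSet s) :
      ∫ y, s.indicator (fun _ => (1 : ℝ)) y * (L γ y) ^ 2 * g γ y =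
        κ * ∫ y in s, Real.exp (2 * a * (y 0 - Real.log γ)) ∂(ν γ) := by
    rw [hI γ hs, ← integral_const_mul, ← integral_indicator hs]
    congr 1
    ext y
    by_cases hy : y ∈ s
    · simp only [Set.indicator_of_mem hy, hL]; ring
    · simp [Set.indicator_of_notMem hy]
  have hfin := (hmain (ν γ) (fun y => y 0 - Real.log γ) (hU γ) (hlaw γ) _ (hT γ)
    (by rw [← hset γ hγ]; exact hsub γ) a ha1).2
  simp only [EZ2, ET2, P1, P2]
  rw [hE (hM γ hγ), hE (hT γ), hP γ (hM γ hγ), hP γ (hT γ), ← mul_sub,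
    mul_div_mul_left _ _ hκ0.ne', hset γ hγ]
  refine hfin.trans ?_
  rw [mul_assoc K (√(2 / S 0 0)), ← Real.sqrt_mul (by positivity)]
  gcongr
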